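/- Variance decomposition: For every 2 ≤ k ≤ d and every function f^{(k)} : 𝒞(k) → ℝ, one has Var_{π_k}(f^{(k)}) = Σ_{S ∈ 𝒞(k−2)} π_{k−2}(S) · Var_{π_{S,2}}(f_S^{(2)}) + Var_{π_{k−2}}(f^{(k−2)}), where f_S^{(2)} : 𝒞_S(2) → ℝ is defined by f_S^{(2)}(T) := f^{(k)}(S ∪ T). -/

import Mathlib

/-! The identity is the law of total variance for the two-step refinement of `π_{k-2}` into `π_k`.
Write `w(S)` for the total top-level mass above `S`. Double counting gives
`Σ_{T ∈ C(m), T ⊇ S} w(T) = (d-|S| choose m-|S|) w(S)` (`sum_wgt_above`), which evaluates every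
normalising constant. Consequently, for `S ∈ C(k-2)`, both the expectation of `f(S ∪ ·)` under
`π_{S,2}` (`link_expect`) and the value `f^{(k-2)}(S)` (`upOp_upOp_eq`) equal the explicit average
`condExpect` of `f` over the `k`-faces above `S`; in the latter each `T ⊇ S` is reached through
exactly two intermediate faces. Averaging `condExpect` over `π_{k-2}` gives back the `π_k`-average
(`tower`), and the claim follows by splitting the second moment. -/


open Finset

noncomputable section

variable {E : Type*} [Fintype E] [DecidableEq E]

/-- The faces of cardinality `k` of the set family `C`. -/
def faces (C : Finset (Finset E)) (k : ℕ) : Finset (Finset E) :=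
  C.filter fun S => S.card = k

/-- `C` is a pure simplicial complex of dimension `d`: it is nonempty, closed under
taking subsets, and every face is contained in a face of cardinality `d`
(hence all maximal faces have cardinality `d`). -/
def IsPureComplex (C : Finset (Finset E)) (d : ℕ) : Prop :=
  C.Nonempty ∧ (∀ S ∈ C, ∀ T ⊆ S, T ∈ C) ∧ (∀ S ∈ C, ∃ T ∈ C, S ⊆ T ∧ T.card = d)

/-- `pid` is a probability distribution with full support on the top level faces. -/
def IsTopDist (C : Finset (Finset E)) (d : ℕ) (pid : Finset E → ℝ) : Prop :=
  (∀ T ∈ faces C d, 0 < pid T) ∧ ∑ T ∈ faces C d, pid T = 1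

/-- The (unnormalised) weight of a face: total top-level mass above it. -/
def wgt (C : Finset (Finset E)) (d : ℕ) (pid : Finset E → ℝ) (S : Finset E) : ℝ :=
  ∑ T ∈ (faces C d).filter (fun T => S ⊆ T), pid T

/-- The distribution `π_k` at level `k`: `π_k(S) ∝ Σ_{T ∈ C(d), T ⊇ S} π_d(T)`. -/
def piLev (C : Finset (Finset E)) (d : ℕ) (pid : Finset E → ℝ) (k : ℕ) (S : Finset E) : ℝ :=
  if S ∈ faces C k then wgt C d pid S / ∑ T ∈ faces C k, wgt C d pid T else 0

/-- The level-`k` faces of the link of the face `S`. -/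
def linkFaces (C : Finset (Finset E)) (S : Finset E) (k : ℕ) : Finset (Finset E) :=
  Finset.univ.powerset.filter fun T => S ∩ T = ∅ ∧ S ∪ T ∈ C ∧ T.card = k

/-- The distribution `π_{S,k}` on the level-`k` faces of the link of `S`:
`π_{S,k}(T) ∝ π_{|S|+k}(S ∪ T)`. -/
def linkPi (C : Finset (Finset E)) (d : ℕ) (pid : Finset E → ℝ) (S : Finset E) (k : ℕ)
    (T : Finset E) : ℝ :=
  if T ∈ linkFaces C S k then
    piLev C d pid (S.card + k) (S ∪ T) /
      ∑ T' ∈ linkFaces C S k, piLev C d pid (S.card + k) (S ∪ T')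
  else 0

/-- Generic up operator with respect to a measure `ν` on a collection `dom` of faces:
from `R` move to a superset `T ∈ dom` with probability proportional to `ν T`.
Acts on functions on `dom`, producing a function on the level below. -/
def upWith (ν : Finset E → ℝ) (dom : Finset (Finset E)) (f : Finset E → ℝ) (R : Finset E) : ℝ :=
  ∑ T ∈ dom.filter (fun T => R ⊆ T),
    (ν T / ∑ T' ∈ dom.filter (fun T' => R ⊆ T'), ν T') * f T

/-- The up operator `P_k^↑`, acting on functions on `C(k+1)` and producing a function
on `C(k)`. -/
def upOp (C : Finset (Finset E)) (d : ℕ) (pid : Finset E → ℝ) (k : ℕ) :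
    (Finset E → ℝ) → Finset E → ℝ :=
  upWith (piLev C d pid (k+1)) (faces C (k+1))

/-- The down operator `P_k^↓` (uniform removal of an element), acting on functions
on `C(k-1)` and producing a function on `C(k)`. -/
def downOp (k : ℕ) (g : Finset E → ℝ) (S : Finset E) : ℝ :=
  (1 / (k : ℝ)) * ∑ i ∈ S, g (S.erase i)

/-- The down-up walk `P_k^∨ = P_k^↓ P_{k-1}^↑` on `C(k)`, as an operator on functions. -/
def downUp (C : Finset (Finset E)) (d : ℕ) (pid : Finset E → ℝ) (k : ℕ)
    (f : Finset E → ℝ) : Finset E → ℝ :=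
  downOp k (upOp C d pid (k-1) f)

/-- The up-down walk `P_k^∧ = P_k^↑ P_{k+1}^↓` on `C(k)`, as an operator on functions. -/
def upDown (C : Finset (Finset E)) (d : ℕ) (pid : Finset E → ℝ) (k : ℕ)
    (f : Finset E → ℝ) : Finset E → ℝ :=
  upOp C d pid k (downOp (k+1) f)

/-- The up operator `P_{S,k}^↑` on the link of `S`, acting on functions on `C_S(k+1)`
and producing a function on `C_S(k)`. -/
def linkUp (C : Finset (Finset E)) (d : ℕ) (pid : Finset E → ℝ) (S : Finset E) (k : ℕ) :
    (Finset E → ℝ) → Finset E → ℝ :=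
  upWith (linkPi C d pid S (k+1)) (linkFaces C S (k+1))

/-- The up-down walk `P_{S,k}^∧` on the level-`k` faces of the link of `S`. -/
def linkUpDown (C : Finset (Finset E)) (d : ℕ) (pid : Finset E → ℝ) (S : Finset E) (k : ℕ)
    (f : Finset E → ℝ) : Finset E → ℝ :=
  linkUp C d pid S k (downOp (k+1) f)

/-- The local walk `G_S := 2 P_{S,1}^∧ - I` on the vertices of the link of `S`. -/
def localWalk (C : Finset (Finset E)) (d : ℕ) (pid : Finset E → ℝ) (S : Finset E)
    (f : Finset E → ℝ) (T : Finset E) : ℝ :=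
  2 * linkUpDown C d pid S 1 f T - f T

/-- Variance of `f` with respect to the measure `μ` on `dom`. -/
def pVar (μ : Finset E → ℝ) (dom : Finset (Finset E)) (f : Finset E → ℝ) : ℝ :=
  (∑ x ∈ dom, μ x * f x ^ 2) - (∑ x ∈ dom, μ x * f x) ^ 2

/-- Relative entropy `Ent_μ(f) = E_μ[f log f] - E_μ[f] log E_μ[f]` of `f` with respect to
the measure `μ` on `dom` (note `Real.log 0 = 0`, giving the convention `0 log 0 = 0`). -/
def pEnt (μ : Finset E → ℝ) (dom : Finset (Finset E)) (f : Finset E → ℝ) : ℝ :=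
  (∑ x ∈ dom, μ x * (f x * Real.log (f x))) -
    (∑ x ∈ dom, μ x * f x) * Real.log (∑ x ∈ dom, μ x * f x)

/-- The Dirichlet form `𝔈_P(f,g) = Σ_x μ(x) f(x) ((I - P) g)(x)` of a Markov operator `P`
reversible with respect to `μ` on `dom`. -/
def pDiri (μ : Finset E → ℝ) (dom : Finset (Finset E))
    (P : (Finset E → ℝ) → Finset E → ℝ) (f g : Finset E → ℝ) : ℝ :=
  ∑ x ∈ dom, μ x * f x * (g x - P g x)

/-- The second largest eigenvalue of a Markov operator `P` reversible with respect to the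
distribution `μ` on `dom`, via the variational characterisation: the supremum of Rayleigh
quotients `⟨f, Pf⟩_μ / ⟨f, f⟩_μ` over `f` orthogonal to the constants in `L²(μ)`. -/
noncomputable def lamTwo (μ : Finset E → ℝ) (dom : Finset (Finset E))
    (P : (Finset E → ℝ) → Finset E → ℝ) : ℝ :=
  sSup {r : ℝ | ∃ f : Finset E → ℝ,
    (∑ x ∈ dom, μ x * f x = 0) ∧ (∑ x ∈ dom, μ x * f x ^ 2 ≠ 0) ∧
    r = (∑ x ∈ dom, μ x * f x * P f x) / ∑ x ∈ dom, μ x * f x ^ 2}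

/-- The modified log-Sobolev constant `ρ(P)` of a Markov operator `P` reversible with
respect to `μ` on `dom`. -/
noncomputable def mlsConst (μ : Finset E → ℝ) (dom : Finset (Finset E))
    (P : (Finset E → ℝ) → Finset E → ℝ) : ℝ :=
  sInf {r : ℝ | ∃ f : Finset E → ℝ, (∀ x ∈ dom, 0 < f x) ∧ pEnt μ dom f ≠ 0 ∧
    r = pDiri μ dom P f (fun x => Real.log (f x)) / pEnt μ dom f}

/-- The average of `f` over the faces of cardinality `j + 2` above `S ∈ C(j)`, weighted by `wgt`;
the normalising constant is the value given by `sum_wgt_above`. -/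
def condExpect (C : Finset (Finset E)) (d : ℕ) (pid : Finset E → ℝ) (j : ℕ)
    (f : Finset E → ℝ) (S : Finset E) : ℝ :=
  (∑ T ∈ (faces C (j + 2)).filter (fun T => S ⊆ T), wgt C d pid T * f T) /
    (((d - j).choose 2 : ℕ) * wgt C d pid S)

lemma mem_faces {C : Finset (Finset E)} {k : ℕ} {S : Finset E} :
    S ∈ faces C k ↔ S ∈ C ∧ S.card = k := by
  simp [faces]

lemma card_between {C : Finset (Finset E)} {d : ℕ} (hC : IsPureComplex C d)
    {S U : Finset E} (hU : U ∈ C) (hSU : S ⊆ U) {m : ℕ} (hm : S.card ≤ m) :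
    ((faces C m).filter (fun T => S ⊆ T ∧ T ⊆ U)).card
      = (U.card - S.card).choose (m - S.card) := by
  rw [← card_sdiff_of_subset hSU, ← card_powersetCard]
  refine card_bij' (fun T _ => T \ S) (fun T _ => S ∪ T) ?_ ?_ ?_ ?_
  · intro T hT
    simp only [mem_filter, mem_faces] at hT
    rw [mem_powersetCard, card_sdiff_of_subset hT.2.1, hT.1.2]
    exact ⟨sdiff_subset_sdiff hT.2.2 le_rfl, rfl⟩
  · intro T hT
    rw [mem_powersetCard] at hT
    have hsub : S ∪ T ⊆ U := union_subset hSU (hT.1.trans sdiff_subset)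
    have hdis : Disjoint S T := (disjoint_sdiff).mono_right hT.1
    simp only [mem_filter, mem_faces]
    refine ⟨⟨hC.2.1 U hU _ hsub, ?_⟩, subset_union_left, hsub⟩
    rw [card_union_of_disjoint hdis, hT.2]
    omega
  · intro T hT
    simp only [mem_filter] at hT
    exact union_sdiff_of_subset hT.2.1
  · intro T hT
    rw [mem_powersetCard] at hT
    exact union_sdiff_cancel_left ((disjoint_sdiff).mono_right hT.1)

lemma wgt_pos {C : Finset (Finset E)} {d : ℕ} {pid : Finset E → ℝ}
    (hC : IsPureComplex C d) (hpid : IsTopDist C d pid) {S : Finset E} (hS : S ∈ C) :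
    0 < wgt C d pid S := by
  obtain ⟨T, hT, hST, hcard⟩ := hC.2.2 S hS
  refine sum_pos (fun U hU => hpid.1 U (mem_filter.1 hU).1) ⟨T, ?_⟩
  exact mem_filter.2 ⟨mem_faces.2 ⟨hT, hcard⟩, hST⟩

/-- Double counting: a top face `U ⊇ S` contributes `pid U` once for each `m`-subset `T` with
`S ⊆ T ⊆ U`. -/
lemma sum_wgt_above {C : Finset (Finset E)} {d : ℕ} (pid : Finset E → ℝ)
    (hC : IsPureComplex C d) {S : Finset E} {m : ℕ} (hm : S.card ≤ m) :
    ∑ T ∈ (faces C m).filter (fun T => S ⊆ T), wgt C d pid T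
      = ((d - S.card).choose (m - S.card) : ℕ) * wgt C d pid S := by
  unfold wgt
  rw [mul_sum, sum_comm' (t' := (faces C d).filter (fun U => S ⊆ U))
    (s' := fun U => (faces C m).filter (fun T => S ⊆ T ∧ T ⊆ U))]
  · refine sum_congr rfl fun U hU => ?_
    rw [mem_filter, mem_faces] at hU
    rw [sum_const, card_between hC hU.1.1 hU.2 hm, hU.1.2, nsmul_eq_mul]
  · intro T U
    simp only [mem_filter]
    constructor
    · rintro ⟨⟨a, b⟩, c, e⟩
      exact ⟨⟨a, b, e⟩, c, b.trans e⟩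
    · rintro ⟨⟨a, b, e⟩, c, _⟩
      exact ⟨⟨a, b⟩, c, e⟩

/-- The case `S = ∅` of `sum_wgt_above`: the normalising constant of `π_m`. -/
lemma sum_wgt_faces {C : Finset (Finset E)} {d : ℕ} {pid : Finset E → ℝ}
    (hC : IsPureComplex C d) (hpid : IsTopDist C d pid) (m : ℕ) :
    ∑ T ∈ faces C m, wgt C d pid T = (d.choose m : ℕ) := by
  have h := sum_wgt_above pid hC (S := ∅) (m := m) (by simp)
  have h0 : wgt C d pid ∅ = 1 := by simpa [wgt] using hpid.2
  simpa [h0] using h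

lemma piLev_eq {C : Finset (Finset E)} {d : ℕ} {pid : Finset E → ℝ}
    (hC : IsPureComplex C d) (hpid : IsTopDist C d pid) {m : ℕ} {S : Finset E}
    (hS : S ∈ faces C m) :
    piLev C d pid m S = wgt C d pid S / (d.choose m : ℕ) := by
  rw [piLev, if_pos hS, sum_wgt_faces hC hpid]

lemma choose_cast_ne_zero {n m : ℕ} (h : m ≤ n) : ((n.choose m : ℕ) : ℝ) ≠ 0 :=
  Nat.cast_ne_zero.2 (Nat.choose_pos h).ne'

lemma sum_piLev_above {C : Finset (Finset E)} {d : ℕ} {pid : Finset E → ℝ}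
    (hC : IsPureComplex C d) (hpid : IsTopDist C d pid) {S : Finset E} {m : ℕ}
    (hm : S.card ≤ m) :
    ∑ T ∈ (faces C m).filter (fun T => S ⊆ T), piLev C d pid m T
      = ((d - S.card).choose (m - S.card) : ℕ) * wgt C d pid S / (d.choose m : ℕ) := by
  rw [← sum_wgt_above pid hC hm, sum_div]
  exact sum_congr rfl fun T hT => piLev_eq hC hpid (mem_filter.1 hT).1

lemma upOp_eq {C : Finset (Finset E)} {d : ℕ} {pid : Finset E → ℝ}
    (hC : IsPureComplex C d) (hpid : IsTopDist C d pid) {j : ℕ} (hj : j + 1 ≤ d)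
    {S : Finset E} (hS : S ∈ faces C j) (g : Finset E → ℝ) :
    upOp C d pid j g S =
      (∑ T ∈ (faces C (j + 1)).filter (fun T => S ⊆ T), wgt C d pid T * g T) /
        ((d - j : ℕ) * wgt C d pid S) := by
  have hS' := mem_faces.1 hS
  have hz := choose_cast_ne_zero hj
  have hw := (wgt_pos hC hpid hS'.1).ne'
  have hdj : ((d - j : ℕ) : ℝ) ≠ 0 := Nat.cast_ne_zero.2 (by omega)
  rw [upOp, upWith, sum_piLev_above hC hpid (by omega), hS'.2, sum_div]
  refine sum_congr rfl fun T hT => ?_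
  rw [piLev_eq hC hpid (mem_filter.1 hT).1, show j + 1 - j = 1 by omega, Nat.choose_one_right]
  field_simp

lemma upOp_upOp_eq {C : Finset (Finset E)} {d : ℕ} {pid : Finset E → ℝ}
    (hC : IsPureComplex C d) (hpid : IsTopDist C d pid) {j : ℕ} (hj : j + 2 ≤ d)
    {S : Finset E} (hS : S ∈ faces C j) (f : Finset E → ℝ) :
    upOp C d pid j (upOp C d pid (j + 1) f) S = condExpect C d pid j f S := by
  have hS' := mem_faces.1 hS
  have hw := (wgt_pos hC hpid hS'.1).ne'
  have hdj : ((d - j : ℕ) : ℝ) ≠ 0 := Nat.cast_ne_zero.2 (by omega)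
  have hdj1 : ((d - (j + 1) : ℕ) : ℝ) ≠ 0 := Nat.cast_ne_zero.2 (by omega)
  have hch : (((d - j).choose 2 : ℕ) : ℝ) = (d - j : ℕ) * (d - (j + 1) : ℕ) / 2 := by
    rw [Nat.cast_choose_two, show d - j = d - (j + 1) + 1 by omega]
    push_cast
    ring
  -- Each `T ⊇ S` in `C(j+2)` is counted once for each of the two faces strictly between.
  have hdouble : ∑ R ∈ (faces C (j + 1)).filter (fun R => S ⊆ R),
      ∑ T ∈ (faces C (j + 2)).filter (fun T => R ⊆ T), wgt C d pid T * f T =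
      2 * ∑ T ∈ (faces C (j + 2)).filter (fun T => S ⊆ T), wgt C d pid T * f T := by
    rw [mul_sum, sum_comm' (t' := (faces C (j + 2)).filter (fun T => S ⊆ T))
      (s' := fun T => (faces C (j + 1)).filter (fun R => S ⊆ R ∧ R ⊆ T))]
    · refine sum_congr rfl fun T hT => ?_
      rw [mem_filter, mem_faces] at hT
      rw [sum_const, card_between hC hT.1.1 hT.2 (by omega), hT.1.2, hS'.2, nsmul_eq_mul,
        show j + 2 - j = 2 by omega, show j + 1 - j = 1 by omega]
      norm_num
    · intro R T
      simp only [mem_filter]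
      constructor
      · rintro ⟨⟨a, b⟩, c, e⟩
        exact ⟨⟨a, b, e⟩, c, b.trans e⟩
      · rintro ⟨⟨a, b, e⟩, c, _⟩
        exact ⟨⟨a, b⟩, c, e⟩
  have hinner : ∑ R ∈ (faces C (j + 1)).filter (fun R => S ⊆ R),
      wgt C d pid R * upOp C d pid (j + 1) f R =
      (∑ R ∈ (faces C (j + 1)).filter (fun R => S ⊆ R),
        ∑ T ∈ (faces C (j + 2)).filter (fun T => R ⊆ T), wgt C d pid T * f T) /
        (d - (j + 1) : ℕ) := by
    rw [sum_div]
    refine sum_congr rfl fun R hR => ?_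
    have hR' := (mem_filter.1 hR).1
    have hwR := (wgt_pos hC hpid (mem_faces.1 hR').1).ne'
    rw [upOp_eq hC hpid hj hR']
    field_simp
  rw [upOp_eq hC hpid (by omega) hS, hinner, hdouble, condExpect, hch]
  field_simp

/-- The bijection `T ↦ S ∪ T` from faces of the link of `S` to faces of `C` above `S`. -/
lemma sum_linkFaces (C : Finset (Finset E)) (S : Finset E) (m : ℕ) (h : Finset E → ℝ) :
    ∑ T ∈ linkFaces C S m, h (S ∪ T) =
      ∑ T ∈ (faces C (S.card + m)).filter (fun T => S ⊆ T), h T := by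
  refine sum_bij' (fun T _ => S ∪ T) (fun T _ => T \ S) ?_ ?_ ?_ ?_ ?_
  · intro T hT
    simp only [linkFaces, mem_filter] at hT
    obtain ⟨-, hdis, hmem, hcard⟩ := hT
    rw [mem_filter, mem_faces, card_union_of_disjoint (disjoint_iff_inter_eq_empty.2 hdis), hcard]
    exact ⟨⟨hmem, rfl⟩, subset_union_left⟩
  · intro T hT
    rw [mem_filter, mem_faces] at hT
    simp only [linkFaces, mem_filter]
    refine ⟨by simp, inter_sdiff_self S T, ?_, ?_⟩
    · rw [union_sdiff_of_subset hT.2]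
      exact hT.1.1
    · rw [card_sdiff_of_subset hT.2, hT.1.2]
      omega
  · intro T hT
    simp only [linkFaces, mem_filter] at hT
    exact union_sdiff_cancel_left (disjoint_iff_inter_eq_empty.2 hT.2.1)
  · intro T hT
    exact union_sdiff_of_subset (mem_filter.1 hT).2
  · intro T _
    rfl

lemma link_expect {C : Finset (Finset E)} {d : ℕ} {pid : Finset E → ℝ}
    (hC : IsPureComplex C d) (hpid : IsTopDist C d pid) {j : ℕ} (hj : j + 2 ≤ d)
    {S : Finset E} (hS : S ∈ faces C j) (g : Finset E → ℝ) :
    ∑ T ∈ linkFaces C S 2, linkPi C d pid S 2 T * g (S ∪ T) = condExpect C d pid j g S := by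
  have hS' := mem_faces.1 hS
  have hw := (wgt_pos hC hpid hS'.1).ne'
  have hz := choose_cast_ne_zero hj
  have hz2 := choose_cast_ne_zero (show 2 ≤ d - j by omega)
  have hnorm : ∑ T ∈ linkFaces C S 2, piLev C d pid (j + 2) (S ∪ T) =
      ((d - j).choose 2 : ℕ) * wgt C d pid S / (d.choose (j + 2) : ℕ) := by
    rw [sum_linkFaces C S 2 (piLev C d pid (j + 2)), hS'.2, sum_piLev_above hC hpid (by omega),
      hS'.2, show j + 2 - j = 2 by omega]
  have hstep : ∑ T ∈ linkFaces C S 2, linkPi C d pid S 2 T * g (S ∪ T) =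
      ∑ U ∈ (faces C (S.card + 2)).filter (fun U => S ⊆ U), piLev C d pid (j + 2) U /
        (((d - j).choose 2 : ℕ) * wgt C d pid S / (d.choose (j + 2) : ℕ)) * g U := by
    rw [← sum_linkFaces C S 2 (fun U => piLev C d pid (j + 2) U /
        (((d - j).choose 2 : ℕ) * wgt C d pid S / (d.choose (j + 2) : ℕ)) * g U)]
    refine sum_congr rfl fun T hT => ?_
    rw [linkPi, if_pos hT, hS'.2, hnorm]
  rw [hstep, hS'.2, condExpect, sum_div]
  refine sum_congr rfl fun T hT => ?_
  rw [piLev_eq hC hpid (mem_filter.1 hT).1]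
  field_simp

/-- Law of total expectation. Each `T ∈ C(j+2)` lies above `(j+2 choose j)` faces of `C(j)`, and
`(d choose j+2) (j+2 choose j) = (d choose j) (d-j choose 2)` matches the normalising constants. -/
lemma tower {C : Finset (Finset E)} {d : ℕ} {pid : Finset E → ℝ}
    (hC : IsPureComplex C d) (hpid : IsTopDist C d pid) {j : ℕ} (hj : j + 2 ≤ d)
    (g : Finset E → ℝ) :
    ∑ S ∈ faces C j, piLev C d pid j S * condExpect C d pid j g S =
      ∑ T ∈ faces C (j + 2), piLev C d pid (j + 2) T * g T := by
  have hz := choose_cast_ne_zero hj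
  have hz0 := choose_cast_ne_zero (show j ≤ d by omega)
  have hz2 := choose_cast_ne_zero (show 2 ≤ d - j by omega)
  have hchoose : ((d.choose (j + 2) : ℕ) : ℝ) * ((j + 2).choose j : ℕ) =
      (d.choose j : ℕ) * ((d - j).choose 2 : ℕ) := by
    have h := Nat.choose_mul (n := d) (k := j + 2) (s := j) (by omega)
    rw [show j + 2 - j = 2 by omega] at h
    exact_mod_cast h
  have hL : ∀ S ∈ faces C j, piLev C d pid j S * condExpect C d pid j g S =
      ∑ T ∈ (faces C (j + 2)).filter (fun T => S ⊆ T),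
        wgt C d pid T * g T / ((d.choose j : ℕ) * ((d - j).choose 2 : ℕ)) := by
    intro S hS
    have hw := (wgt_pos hC hpid (mem_faces.1 hS).1).ne'
    rw [piLev_eq hC hpid hS, condExpect, ← sum_div]
    field_simp
  rw [sum_congr rfl hL, sum_comm' (t' := faces C (j + 2))
    (s' := fun T => (faces C j).filter (fun S => ∅ ⊆ S ∧ S ⊆ T))]
  · refine sum_congr rfl fun T hT => ?_
    have hT' := mem_faces.1 hT
    have hcj := choose_cast_ne_zero (show j ≤ j + 2 by omega)
    rw [sum_const, card_between hC hT'.1 (empty_subset T) (by simp), hT'.2, nsmul_eq_mul,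
      piLev_eq hC hpid hT, ← hchoose, card_empty, Nat.sub_zero, Nat.sub_zero]
    field_simp
  · intro S T
    simp only [mem_filter, empty_subset, true_and]
    tauto

/-- **Variance decomposition.** For `2 ≤ k ≤ d` and `f : C(k) → ℝ`,
`Var_{π_k}(f) = Σ_{S ∈ C(k-2)} π_{k-2}(S) Var_{π_{S,2}}(f_S^{(2)}) + Var_{π_{k-2}}(f^{(k-2)})`,
where `f_S^{(2)}(T) = f(S ∪ T)` and `f^{(k-2)} = P_{k-2}^↑ P_{k-1}^↑ f`. -/
theorem var_decomposition {E : Type*} [Fintype E] [DecidableEq E]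
    (C : Finset (Finset E)) (d : ℕ) (pid : Finset E → ℝ)
    (hC : IsPureComplex C d) (hpid : IsTopDist C d pid)
    (k : ℕ) (hk2 : 2 ≤ k) (hkd : k ≤ d) (f : Finset E → ℝ) :
    pVar (piLev C d pid k) (faces C k) f =
      (∑ S ∈ faces C (k-2), piLev C d pid (k-2) S *
        pVar (linkPi C d pid S 2) (linkFaces C S 2) (fun T => f (S ∪ T))) +
      pVar (piLev C d pid (k-2)) (faces C (k-2))
        (upOp C d pid (k-2) (upOp C d pid (k-1) f)) := by
  obtain ⟨j, rfl⟩ := Nat.exists_eq_add_of_le' hk2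
  simp only [Nat.add_sub_cancel, show j + 2 - 1 = j + 1 from rfl]
  have hup := fun S (hS : S ∈ faces C j) => upOp_upOp_eq hC hpid hkd hS f
  have hexp := fun (g : Finset E → ℝ) S (hS : S ∈ faces C j) => link_expect hC hpid hkd hS g
  have htower := fun g => tower hC hpid hkd g
  have h1 : ∀ S ∈ faces C j, piLev C d pid j S *
        pVar (linkPi C d pid S 2) (linkFaces C S 2) (fun T => f (S ∪ T)) =
      piLev C d pid j S * condExpect C d pid j (fun T => f T ^ 2) S -
        piLev C d pid j S * condExpect C d pid j f S ^ 2 := by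
    intro S hS
    rw [pVar, hexp (fun T => f T ^ 2) S hS, hexp f S hS]
    ring
  have h2 : pVar (piLev C d pid j) (faces C j) (upOp C d pid j (upOp C d pid (j + 1) f)) =
      ∑ S ∈ faces C j, piLev C d pid j S * condExpect C d pid j f S ^ 2 -
        (∑ S ∈ faces C j, piLev C d pid j S * condExpect C d pid j f S) ^ 2 := by
    unfold pVar
    congr 1
    · exact sum_congr rfl fun S hS => by rw [hup S hS]
    · congr 1
      exact sum_congr rfl fun S hS => by rw [hup S hS]
  rw [h2, sum_congr rfl h1, sum_sub_distrib, htower, htower, pVar]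
  ring
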